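/- (Heine's ₂φ₁-to-₂φ₂ transformation) Let 0<q<1, a,b∈ℂ and z∈ℂ with |z|<1, and suppose c and az do not lie in {1,q^{-1},q^{-2},…}. Then ₂φ₁(a,b;c;q,z) = ((az;q)_∞/(z;q)_∞) · ₂φ₂(a, c/b; c, az; q, bz), where for b=0 the quotient c/b is interpreted via the limit (the k-th coefficient (c/b;q)_k b^k z^k being ∏_{j=0}^{k-1}(b - c q^j) · z^k). -/

import Mathlib

/-!
Since `(a;q)_{k+m} = (a;q)_k (a q^k;q)_m` and `(az;q)_∞ = (az;q)_k (az q^k;q)_∞`, the `q`-binomial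
theorem `∑_m (a q^k;q)_m / (q;q)_m z^m = (az q^k;q)_∞ / (z;q)_∞` turns an absolutely convergent
double series `∑_{k,m} (a;q)_{k+m} v_k z^m / (q;q)_m` into
`(az;q)_∞ / (z;q)_∞ ∑_k (a;q)_k / (az;q)_k v_k`. If `v_k` is the `k`-th term of
`₁φ₁(c/b;c;q,bz)`, this is the `₂φ₂` side of Heine's transformation, and collecting the terms with
`k + m = n` by the `q`-Chu–Vandermonde sum gives the `₂φ₁` side.
-/

noncomputable section

/-- The finite q-shifted factorial `(a;q)_k`. -/
def qp (q a : ℂ) (k : ℕ) : ℂ := ∏ j ∈ Finset.range k, (1 - a * q ^ j)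

/-- The infinite q-shifted factorial `(a;q)_∞`. -/
def qpi (q a : ℂ) : ℂ := ∏' j : ℕ, (1 - a * q ^ j)

/-- The basic hypergeometric series `₂φ₁(a,b;c;q,z)`. -/
def phi21 (q a b c z : ℂ) : ℂ :=
  ∑' k : ℕ, qp q a k * qp q b k / (qp q c k * qp q q k) * z ^ k

section

open Filter Topology
open Finset.HasAntidiagonal (antidiagonal mem_antidiagonal sigmaAntidiagonalEquivProd)

variable {𝕜 : Type*} [NormedDivisionRing 𝕜]

lemma norm_mul_pow_le {q : 𝕜} (hq : ‖q‖ ≤ 1) (z : 𝕜) (n : ℕ) : ‖z * q ^ n‖ ≤ ‖z‖ := by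
  rw [norm_mul, norm_pow]
  exact mul_le_of_le_one_right (norm_nonneg z) (pow_le_one₀ (norm_nonneg q) hq)

lemma mul_pow_ne_one {q z : 𝕜} (hq : ‖q‖ ≤ 1) (hz : ‖z‖ < 1) (n : ℕ) :
    z * q ^ n ≠ 1 := fun h =>
  ((norm_mul_pow_le hq z n).trans_lt hz).ne (by rw [h, norm_one])

lemma summable_norm_neg_mul_pow {q : 𝕜} (hq : ‖q‖ < 1) (a : 𝕜) :
    Summable fun j : ℕ => ‖-(a * q ^ j)‖ := by
  simpa using (summable_geometric_of_lt_one (norm_nonneg q) hq).mul_left ‖a‖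

lemma tsum_sum_antidiagonal {A α : Type*} [AddCommMonoid A] [Finset.HasAntidiagonal A]
    [AddCommGroup α] [UniformSpace α] [IsUniformAddGroup α] [CompleteSpace α] [T0Space α]
    {f : A × A → α} (hf : Summable f) :
    ∑' n : A, ∑ p ∈ antidiagonal n, f p = ∑' k : A, ∑' m : A, f (k, m) := by
  have hsigma := sigmaAntidiagonalEquivProd.summable_iff.2 hf
  rw [← hf.tsum_prod, ← sigmaAntidiagonalEquivProd.tsum_eq f]
  refine Eq.trans (tsum_congr fun n => ?_)
    (hsigma.tsum_sigma' fun n => (hasSum_fintype _).summable).symm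
  rw [tsum_fintype, ← Finset.sum_coe_sort]
  rfl

/-! ### Shifted factorials -/

variable {q : ℂ}

lemma qp_zero (q a : ℂ) : qp q a 0 = 1 := Finset.prod_range_zero _

lemma qp_succ (q a : ℂ) (k : ℕ) : qp q a (k + 1) = qp q a k * (1 - a * q ^ k) :=
  Finset.prod_range_succ _ k

lemma qp_add (q a : ℂ) (k m : ℕ) : qp q a (k + m) = qp q a k * qp q (a * q ^ k) m := by
  simp only [qp, Finset.prod_range_add, pow_add, mul_assoc]

lemma qp_succ' (q a : ℂ) (k : ℕ) : qp q a (k + 1) = (1 - a) * qp q (a * q) k := by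
  simpa [qp_succ, qp_zero, add_comm] using qp_add q a 1 k

lemma qp_ne_zero {a : ℂ} (ha : ∀ n : ℕ, a * q ^ n ≠ 1) (k : ℕ) : qp q a k ≠ 0 :=
  Finset.prod_ne_zero_iff.2 fun n _ => sub_ne_zero.2 (ha n).symm

lemma tendsto_qp (hq : ‖q‖ < 1) (a : ℂ) : Tendsto (qp q a) atTop (𝓝 (qpi q a)) := by
  have h := multipliable_one_add_of_summable (summable_norm_neg_mul_pow hq a)
  simp only [← sub_eq_add_neg] at h
  exact h.hasProd.tendsto_prod_nat

lemma qpi_ne_zero {a : ℂ} (hq : ‖q‖ < 1) (ha : ∀ n : ℕ, a * q ^ n ≠ 1) : qpi q a ≠ 0 := by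
  have h := tprod_one_add_ne_zero_of_summable (f := fun j : ℕ => -(a * q ^ j))
    (fun j => by simpa only [← sub_eq_add_neg] using sub_ne_zero.2 (ha j).symm)
    (summable_norm_neg_mul_pow hq a)
  simpa only [qpi, sub_eq_add_neg] using h

lemma qpi_eq_qp_mul_qpi (hq : ‖q‖ < 1) (a : ℂ) (k : ℕ) :
    qpi q a = qp q a k * qpi q (a * q ^ k) := by
  have hshift : Tendsto (fun n => qp q a (k + n)) atTop (𝓝 (qpi q a)) := by
    simpa only [add_comm k] using (tendsto_add_atTop_iff_nat k).2 (tendsto_qp hq a)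
  simp only [qp_add] at hshift
  exact tendsto_nhds_unique hshift ((tendsto_qp hq (a * q ^ k)).const_mul (qp q a k))

/-! ### The `q`-binomial theorem -/

/-- The basic hypergeometric series `₁φ₀(a;q,z)`, the left-hand side of the `q`-binomial theorem. -/
def phi10 (q a z : ℂ) : ℂ := ∑' n : ℕ, qp q a n / qp q q n * z ^ n

lemma phi10_zero (q a : ℂ) : phi10 q a 0 = 1 := by
  rw [phi10, tsum_eq_single 0 fun n hn => by rw [zero_pow hn, mul_zero]]
  simp [qp_zero]

lemma summable_phi10 (hq : ‖q‖ < 1) (a : ℂ) {z : ℂ} (hz : ‖z‖ < 1) :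
    Summable fun n : ℕ => qp q a n / qp q q n * z ^ n := by
  have hcoeff : Tendsto (fun n => qp q a n / qp q q n) atTop (𝓝 (qpi q a / qpi q q)) :=
    (tendsto_qp hq a).div (tendsto_qp hq q) (qpi_ne_zero hq (mul_pow_ne_one hq.le hq))
  have hgeom : Summable fun n : ℕ => ‖z ^ n‖ := by
    simpa only [norm_pow] using summable_geometric_of_lt_one (norm_nonneg z) hz
  rw [← Nat.cofinite_eq_atTop] at hcoeff
  simpa only [mul_comm] using hgeom.mul_tendsto_const hcoeff

lemma phi10_coeff_succ (hq : ∀ n : ℕ, q * q ^ n ≠ 1) (a : ℂ) (n : ℕ) :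
    qp q a (n + 1) / qp q q (n + 1) * (1 - q ^ (n + 1)) =
      qp q a n / qp q q n * (1 - a * q ^ n) := by
  have hn : 1 - q * q ^ n ≠ 0 := sub_ne_zero.2 (hq n).symm
  rw [qp_succ, qp_succ, pow_succ', mul_div_mul_comm, mul_assoc, div_mul_cancel₀ _ hn]

lemma one_sub_mul_phi10 (hq : ‖q‖ < 1) (a : ℂ) {z : ℂ} (hz : ‖z‖ < 1) :
    (1 - z) * phi10 q a z = (1 - a * z) * phi10 q a (z * q) := by
  have hzq : ‖z * q‖ < 1 := by simpa using (norm_mul_pow_le hq.le z 1).trans_lt hz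
  have hs := summable_phi10 hq a hz
  have hsq := summable_phi10 hq a hzq
  have hdiff : phi10 q a z - phi10 q a (z * q) = z * phi10 q a z - a * z * phi10 q a (z * q) := by
    calc phi10 q a z - phi10 q a (z * q)
        = ∑' n : ℕ, qp q a n / qp q q n * (1 - q ^ n) * z ^ n := by
          rw [phi10, phi10, ← hs.tsum_sub hsq]
          exact tsum_congr fun n => by ring
      _ = ∑' n : ℕ, qp q a (n + 1) / qp q q (n + 1) * (1 - q ^ (n + 1)) * z ^ (n + 1) := by
          rw [Summable.tsum_eq_zero_add]
          · simp
          · exact (hs.sub hsq).congr fun n => by ring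
      _ = ∑' n : ℕ, (z * (qp q a n / qp q q n * z ^ n) -
            a * z * (qp q a n / qp q q n * (z * q) ^ n)) :=
          tsum_congr fun n => by rw [phi10_coeff_succ (mul_pow_ne_one hq.le hq)]; ring
      _ = z * phi10 q a z - a * z * phi10 q a (z * q) := by
          rw [(hs.mul_left z).tsum_sub (hsq.mul_left (a * z)), tsum_mul_left, tsum_mul_left,
            phi10, phi10]
  linear_combination hdiff

lemma qp_mul_phi10 (hq : ‖q‖ < 1) (a : ℂ) {z : ℂ} (hz : ‖z‖ < 1) (N : ℕ) :
    qp q z N * phi10 q a z = qp q (a * z) N * phi10 q a (z * q ^ N) := by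
  induction N with
  | zero => simp [qp_zero]
  | succ N ih =>
    have h := one_sub_mul_phi10 hq a ((norm_mul_pow_le hq.le z N).trans_lt hz)
    rw [qp_succ, qp_succ, pow_succ, ← mul_assoc z]
    linear_combination (1 - z * q ^ N) * ih + qp q (a * z) N * h

lemma tendsto_phi10_mul_pow (hq : ‖q‖ < 1) (a : ℂ) {z : ℂ} (hz : ‖z‖ < 1) :
    Tendsto (fun N : ℕ => phi10 q a (z * q ^ N)) atTop (𝓝 1) := by
  have hzero : Tendsto (fun N : ℕ => z * q ^ N) atTop (𝓝 0) := by
    simpa using (tendsto_pow_atTop_nhds_zero_of_norm_lt_one hq).const_mul z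
  rw [← phi10_zero q a]
  refine tendsto_tsum_of_dominated_convergence (summable_phi10 hq a hz).norm
    (fun n => (hzero.pow n).const_mul _) (.of_forall fun N n => ?_)
  rw [norm_mul, norm_mul, norm_pow, norm_pow]
  gcongr
  exact norm_mul_pow_le hq.le z N

theorem phi10_eq_qpi_div_qpi (hq : ‖q‖ < 1) (a : ℂ) {z : ℂ} (hz : ‖z‖ < 1) :
    phi10 q a z = qpi q (a * z) / qpi q z := by
  have hleft := (tendsto_qp hq z).mul_const (phi10 q a z)
  have hright := (tendsto_qp hq (a * z)).mul (tendsto_phi10_mul_pow hq a hz)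
  simp only [qp_mul_phi10 hq a hz] at hleft
  rw [eq_div_iff (qpi_ne_zero hq (mul_pow_ne_one hq.le hz)), mul_comm,
    tendsto_nhds_unique hleft hright, mul_one]

/-! ### Rearranging the double series -/

lemma summable_qp_add_mul (hq : ‖q‖ < 1) (a : ℂ) {z : ℂ} (hz : ‖z‖ < 1) {v : ℕ → ℂ}
    (hv : Summable v) :
    Summable fun p : ℕ × ℕ => qp q a (p.1 + p.2) * (v p.1 * (z ^ p.2 / qp q q p.2)) := by
  have hz_exp : Summable fun m : ℕ => z ^ m / qp q q m :=
    (summable_phi10 hq 0 hz).congr fun m => by simp [qp, div_eq_inv_mul]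
  obtain ⟨C, hC⟩ := (tendsto_qp hq a).norm.bddAbove_range
  refine .of_norm_bounded
    ((summable_mul_of_summable_norm hv.norm hz_exp.norm).norm.mul_left C) fun p => ?_
  rw [norm_mul]
  gcongr
  exact hC ⟨p.1 + p.2, rfl⟩

lemma tsum_qp_add_mul (hq : ‖q‖ < 1) (a : ℂ) {z : ℂ} (hz : ‖z‖ < 1)
    (haz : ∀ n : ℕ, a * z * q ^ n ≠ 1) (k : ℕ) :
    ∑' m : ℕ, qp q a (k + m) * (z ^ m / qp q q m) =
      qpi q (a * z) / qpi q z * (qp q a k / qp q (a * z) k) := by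
  have hk := qp_ne_zero haz k
  calc ∑' m : ℕ, qp q a (k + m) * (z ^ m / qp q q m)
      = qp q a k * phi10 q (a * q ^ k) z := by
        rw [phi10, ← tsum_mul_left]
        exact tsum_congr fun m => by rw [qp_add]; ring
    _ = qp q a k * (qpi q (a * z * q ^ k) / qpi q z) := by
        rw [phi10_eq_qpi_div_qpi hq _ hz, mul_right_comm]
    _ = qpi q (a * z) / qpi q z * (qp q a k / qp q (a * z) k) := by
        rw [qpi_eq_qp_mul_qpi hq (a * z) k]
        field_simp

theorem tsum_qp_mul_sum_antidiagonal (hq : ‖q‖ < 1) (a : ℂ) {z : ℂ} (hz : ‖z‖ < 1)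
    (haz : ∀ n : ℕ, a * z * q ^ n ≠ 1) {v : ℕ → ℂ} (hv : Summable v) :
    ∑' n : ℕ, qp q a n * ∑ p ∈ antidiagonal n, v p.1 * (z ^ p.2 / qp q q p.2) =
      qpi q (a * z) / qpi q z * ∑' k : ℕ, qp q a k / qp q (a * z) k * v k := by
  calc ∑' n : ℕ, qp q a n * ∑ p ∈ antidiagonal n, v p.1 * (z ^ p.2 / qp q q p.2)
      = ∑' n : ℕ, ∑ p ∈ antidiagonal n,
          qp q a (p.1 + p.2) * (v p.1 * (z ^ p.2 / qp q q p.2)) := by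
        refine tsum_congr fun n => ?_
        rw [Finset.mul_sum]
        exact Finset.sum_congr rfl fun p hp => by rw [mem_antidiagonal.1 hp]
    _ = ∑' k : ℕ, ∑' m : ℕ, qp q a (k + m) * (v k * (z ^ m / qp q q m)) :=
        tsum_sum_antidiagonal (summable_qp_add_mul hq a hz hv)
    _ = ∑' k : ℕ, qpi q (a * z) / qpi q z * (qp q a k / qp q (a * z) k * v k) := by
        refine tsum_congr fun k => ?_
        rw [← mul_assoc, ← tsum_qp_add_mul hq a hz haz, ← tsum_mul_right]
        exact tsum_congr fun m => by ring
    _ = qpi q (a * z) / qpi q z * ∑' k : ℕ, qp q a k / qp q (a * z) k * v k := tsum_mul_left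

/-! ### The `q`-Chu–Vandermonde sum -/

/-- The coefficient of `z^k` in `₁φ₁(c/b;c;q,bz)`. The product stands for `(c/b;q)_k b^k` and is
meaningful at `b = 0` too. -/
def phi11Coeff (q b c : ℂ) (k : ℕ) : ℂ :=
  (-1) ^ k * q ^ (k * (k - 1) / 2) * (∏ j ∈ Finset.range k, (b - c * q ^ j)) /
    (qp q c k * qp q q k)

lemma phi11Coeff_succ (q b c : ℂ) (k : ℕ) :
    phi11Coeff q b c (k + 1) =
      -(q ^ k * (b - c * q ^ k)) / ((1 - c * q ^ k) * (1 - q * q ^ k)) * phi11Coeff q b c k := by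
  rw [phi11Coeff, phi11Coeff, Nat.triangle_succ, Finset.prod_range_succ, qp_succ, qp_succ,
    div_mul_div_comm]
  congr 1 <;> ring

lemma phi11Coeff_succ' (hq : ∀ n : ℕ, q * q ^ n ≠ 1) (b c : ℂ) (k : ℕ) :
    (1 - q ^ (k + 1)) * phi11Coeff q b c (k + 1) =
      -(q ^ k * ((b - c) / (1 - c))) * phi11Coeff q b (c * q) k := by
  have hk : 1 - q * q ^ k ≠ 0 := sub_ne_zero.2 (hq k).symm
  have hprod : ∏ j ∈ Finset.range (k + 1), (b - c * q ^ j) =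
      (∏ j ∈ Finset.range k, (b - c * q * q ^ j)) * (b - c) := by
    simp only [Finset.prod_range_succ', pow_succ', mul_assoc, pow_zero, mul_one]
  rw [phi11Coeff, phi11Coeff, Nat.triangle_succ, hprod, qp_succ', qp_succ q q, pow_succ' q k]
  field_simp
  ring

lemma summable_phi11 (hq : ‖q‖ < 1) (b c z : ℂ) :
    Summable fun k : ℕ => phi11Coeff q b c k * z ^ k := by
  have hpow := tendsto_pow_atTop_nhds_zero_of_norm_lt_one hq
  have hratio : Tendsto (fun k : ℕ =>
      -(q ^ k * (b - c * q ^ k)) / ((1 - c * q ^ k) * (1 - q * q ^ k)) * z) atTop (𝓝 0) := by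
    have hnum := (hpow.mul ((hpow.const_mul c).const_sub b)).neg
    have hden := ((hpow.const_mul c).const_sub 1).mul ((hpow.const_mul q).const_sub 1)
    simpa using (hnum.div hden (by simp)).mul_const z
  refine summable_of_ratio_norm_eventually_le (r := 1 / 2) (by norm_num) ?_
  filter_upwards [hratio.norm.eventually_le_const (by norm_num : ‖(0 : ℂ)‖ < 1 / 2)] with k hk
  calc ‖phi11Coeff q b c (k + 1) * z ^ (k + 1)‖
      = ‖-(q ^ k * (b - c * q ^ k)) / ((1 - c * q ^ k) * (1 - q * q ^ k)) * z‖ *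
          ‖phi11Coeff q b c k * z ^ k‖ := by
        rw [← norm_mul, phi11Coeff_succ, pow_succ]
        ring_nf
    _ ≤ 1 / 2 * ‖phi11Coeff q b c k * z ^ k‖ := by gcongr

lemma sum_antidiagonal_phi11Coeff_succ (hq : ∀ n : ℕ, q * q ^ n ≠ 1) (b c : ℂ) (n : ℕ) :
    (1 - q ^ (n + 1)) * ∑ p ∈ antidiagonal (n + 1), phi11Coeff q b c p.1 / qp q q p.2 =
      (∑ p ∈ antidiagonal n, phi11Coeff q b c p.1 / qp q q p.2) -
        q ^ n * ((b - c) / (1 - c)) *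
          ∑ p ∈ antidiagonal n, phi11Coeff q b (c * q) p.1 / qp q q p.2 := by
  have hlower : ∑ p ∈ antidiagonal (n + 1), (1 - q ^ p.2) * phi11Coeff q b c p.1 / qp q q p.2 =
      ∑ p ∈ antidiagonal n, phi11Coeff q b c p.1 / qp q q p.2 := by
    rw [Finset.Nat.sum_antidiagonal_succ', pow_zero, sub_self, zero_mul, zero_div, zero_add]
    refine Finset.sum_congr rfl fun p _ => ?_
    rw [qp_succ, pow_succ', mul_comm, mul_div_mul_right _ _ (sub_ne_zero.2 (hq p.2).symm)]
  have hshift : ∑ p ∈ antidiagonal (n + 1),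
        q ^ p.2 * ((1 - q ^ p.1) * phi11Coeff q b c p.1) / qp q q p.2 =
      -(q ^ n * ((b - c) / (1 - c))) *
        ∑ p ∈ antidiagonal n, phi11Coeff q b (c * q) p.1 / qp q q p.2 := by
    rw [Finset.Nat.sum_antidiagonal_succ, pow_zero, sub_self, zero_mul, mul_zero, zero_div,
      zero_add, Finset.mul_sum]
    refine Finset.sum_congr rfl fun p hp => ?_
    rw [phi11Coeff_succ' hq, ← mem_antidiagonal.1 hp]
    ring
  rw [sub_eq_add_neg _ (_ * _), ← neg_mul, ← hlower, ← hshift, ← Finset.sum_add_distrib,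
    Finset.mul_sum]
  refine Finset.sum_congr rfl fun p hp => ?_
  rw [← mem_antidiagonal.1 hp]
  ring

theorem sum_antidiagonal_phi11Coeff (hq : ∀ n : ℕ, q * q ^ n ≠ 1) (b : ℂ) {c : ℂ}
    (hc : ∀ n : ℕ, c * q ^ n ≠ 1) (n : ℕ) :
    ∑ p ∈ antidiagonal n, phi11Coeff q b c p.1 / qp q q p.2 =
      qp q b n / (qp q c n * qp q q n) := by
  induction n generalizing c with
  | zero => simp [phi11Coeff, qp_zero]
  | succ n ih =>
    have hcq : ∀ n : ℕ, c * q * q ^ n ≠ 1 := fun n => by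
      simpa only [pow_succ', mul_assoc] using hc (n + 1)
    have hc0 : 1 - c ≠ 0 := sub_ne_zero.2 (by simpa using (hc 0).symm)
    have hcn : 1 - c * q ^ n ≠ 0 := sub_ne_zero.2 (hc n).symm
    have hqn : 1 - q ^ (n + 1) ≠ 0 := sub_ne_zero.2 (by simpa only [pow_succ'] using (hq n).symm)
    have hcq_qp : qp q (c * q) n = qp q c n * (1 - c * q ^ n) / (1 - c) := by
      rw [← qp_succ, qp_succ', mul_div_cancel_left₀ _ hc0]
    have hqp := qp_ne_zero hq n
    have hcp := qp_ne_zero hc n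
    apply mul_left_cancel₀ hqn
    rw [sum_antidiagonal_phi11Coeff_succ hq, ih hc, ih hcq, hcq_qp, qp_succ q b, qp_succ q c,
      qp_succ q q, ← pow_succ']
    field_simp [mul_comm c] at hcn ⊢
    ring

lemma sum_antidiagonal_phi11Coeff_mul_pow (hq : ∀ n : ℕ, q * q ^ n ≠ 1) (b : ℂ) {c : ℂ}
    (hc : ∀ n : ℕ, c * q ^ n ≠ 1) (z : ℂ) (n : ℕ) :
    ∑ p ∈ antidiagonal n, phi11Coeff q b c p.1 * z ^ p.1 * (z ^ p.2 / qp q q p.2) =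
      qp q b n / (qp q c n * qp q q n) * z ^ n := by
  rw [← sum_antidiagonal_phi11Coeff hq b hc, Finset.sum_mul]
  refine Finset.sum_congr rfl fun p hp => ?_
  rw [← mem_antidiagonal.1 hp, pow_add]
  ring

theorem stmt5_general (hq : ‖q‖ < 1) (a b : ℂ) {c z : ℂ} (hz : ‖z‖ < 1)
    (hc : ∀ n : ℕ, c * q ^ n ≠ 1) (haz : ∀ n : ℕ, a * z * q ^ n ≠ 1) :
    phi21 q a b c z =
      qpi q (a * z) / qpi q z *
        ∑' k : ℕ,
          qp q a k * (∏ j ∈ Finset.range k, (b - c * q ^ j)) /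
              (qp q c k * qp q (a * z) k * qp q q k) *
            ((-1) ^ k * q ^ (k * (k - 1) / 2)) * z ^ k := by
  calc phi21 q a b c z
      = ∑' n : ℕ, qp q a n * ∑ p ∈ antidiagonal n,
          phi11Coeff q b c p.1 * z ^ p.1 * (z ^ p.2 / qp q q p.2) := by
        refine tsum_congr fun n => ?_
        rw [sum_antidiagonal_phi11Coeff_mul_pow (mul_pow_ne_one hq.le hq) b hc]
        ring
    _ = qpi q (a * z) / qpi q z *
          ∑' k : ℕ, qp q a k / qp q (a * z) k * (phi11Coeff q b c k * z ^ k) :=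
        tsum_qp_mul_sum_antidiagonal hq a hz haz (v := fun k => phi11Coeff q b c k * z ^ k)
          (summable_phi11 hq b c z)
    _ = _ := by
        congr 1
        refine tsum_congr fun k => ?_
        rw [phi11Coeff]
        ring

end

/-- Heine's `₂φ₁`-to-`₂φ₂` transformation:
`₂φ₁(a,b;c;q,z) = ((az;q)_∞/(z;q)_∞) ₂φ₂(a, c/b; c, az; q, bz)`,
where the k-th coefficient `(c/b;q)_k b^k` of the `₂φ₂` series is written as
`∏_{j=0}^{k-1} (b - c q^j)`, which also covers the case `b = 0`. -/
theorem stmt5 (q : ℝ) (hq0 : 0 < q) (hq1 : q < 1) (a b c z : ℂ)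
    (hz : ‖z‖ < 1)
    (hc : ∀ n : ℕ, c * (q : ℂ) ^ n ≠ 1) (haz : ∀ n : ℕ, a * z * (q : ℂ) ^ n ≠ 1) :
    phi21 (q : ℂ) a b c z =
      qpi (q : ℂ) (a * z) / qpi (q : ℂ) z *
        ∑' k : ℕ,
          qp (q : ℂ) a k * (∏ j ∈ Finset.range k, (b - c * (q : ℂ) ^ j)) /
              (qp (q : ℂ) c k * qp (q : ℂ) (a * z) k * qp (q : ℂ) (q : ℂ) k) *
            ((-1) ^ k * (q : ℂ) ^ (k * (k - 1) / 2)) * z ^ k := by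
  have hq : ‖(q : ℂ)‖ < 1 := by rwa [Complex.norm_of_nonneg hq0.le]
  exact stmt5_general hq a b hz hc haz
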